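/- Let p ∈ (0,1), let (m_n) be natural numbers with m_n → ∞, let X_n be Binomial(m_n, p)-distributed random variables, and let (c_n) be real numbers with c_n → c. Then c_n·(X_n − m_n·p)/√(m_n) converges in distribution, as n → ∞, to the normal distribution with mean 0 and variance c²·p(1−p). -/

import Mathlib

open MeasureTheory ProbabilityTheory Filter Topology

/-- The Binomial(m, p) distribution as a measure on `ℝ`. -/
noncomputable def binomialReal (m : ℕ) (p : ℝ) : Measure ℝ :=
  ∑ k ∈ Finset.range (m + 1),
    (ENNReal.ofReal ((m.choose k : ℝ) * p ^ k * (1 - p) ^ (m - k))) •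
      Measure.dirac (k : ℝ)

/-- Convergence in distribution: weak convergence of the laws, i.e. convergence of the
integrals of every bounded continuous function. -/
def TendstoInDistribution (μs : ℕ → Measure ℝ) (μ : Measure ℝ) : Prop :=
  ∀ g : BoundedContinuousFunction ℝ ℝ,
    Tendsto (fun n => ∫ x, g x ∂(μs n)) atTop (𝓝 (∫ x, g x ∂μ))

/-- The χ²-distribution with one degree of freedom: the law of `Z ^ 2` for `Z` standard
normal. -/
noncomputable def chiSqOneDF : Measure ℝ :=
  (gaussianReal 0 1).map (fun z => z ^ 2)

/-!
A binomial variable has the law of a sum of independent Bernoulli variables. For such sums the case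
`cs n = 1` is the central limit theorem along the subsequence `m`; since deterministic convergence
is convergence in probability, Slutsky's theorem brings in the factors `cs n`.
-/

open scoped unitInterval

section ConvergenceInDistribution

variable {ι E Ω' : Type*} {l : Filter ι} [MeasurableSpace E] [MeasurableSpace Ω'] {P' : Measure Ω'}
  [IsProbabilityMeasure P'] {Z : Ω' → E}

lemma tendstoInDistribution_of_forall_identDistrib {Ω₁ Ω₂ : ι → Type*} {Ω₂' : Type*}
    [∀ i, MeasurableSpace (Ω₁ i)] [∀ i, MeasurableSpace (Ω₂ i)] [MeasurableSpace Ω₂']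
    {P₁ : ∀ i, Measure (Ω₁ i)} {P₂ : ∀ i, Measure (Ω₂ i)} {P₂' : Measure Ω₂'}
    [∀ i, IsProbabilityMeasure (P₁ i)] [∀ i, IsProbabilityMeasure (P₂ i)] [IsProbabilityMeasure P₂']
    [TopologicalSpace E] [OpensMeasurableSpace E]
    {X : ∀ i, Ω₁ i → E} {Y : ∀ i, Ω₂ i → E} {W : Ω₂' → E}
    (hXY : ∀ i, IdentDistrib (X i) (Y i) (P₁ i) (P₂ i)) (hZW : IdentDistrib Z W P' P₂')
    (h : MeasureTheory.TendstoInDistribution X l Z P₁ P') :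
    MeasureTheory.TendstoInDistribution Y l W P₂ P₂' where
  forall_aemeasurable i := (hXY i).aemeasurable_snd
  aemeasurable_limit := hZW.aemeasurable_snd
  tendsto := by simpa only [(hXY _).map_eq, hZW.map_eq] using h.tendsto

lemma tendstoInMeasure_const_of_tendsto {Ω F : Type*} [MeasurableSpace Ω] [PseudoEMetricSpace F]
    (μ : Measure Ω) {a : ι → F} {c : F} (ha : Tendsto a l (𝓝 c)) :
    TendstoInMeasure μ (fun i _ ↦ a i) l (fun _ ↦ c) := by
  intro ε hε
  refine tendsto_const_nhds.congr' ?_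
  filter_upwards [EMetric.tendsto_nhds.1 ha ε hε] with i hi
  simp [hi.not_ge]

lemma tendstoInDistribution_smul_of_tendsto [l.IsCountablyGenerated] {Ω : Type*}
    [MeasurableSpace Ω] {P : Measure Ω} [IsProbabilityMeasure P]
    [SeminormedAddCommGroup E] [NormedSpace ℝ E] [SecondCountableTopology E] [BorelSpace E]
    {X : ι → Ω → E} {a : ι → ℝ} {c : ℝ} (ha : Tendsto a l (𝓝 c))
    (hX : MeasureTheory.TendstoInDistribution X l Z (fun _ ↦ P) P') :
    MeasureTheory.TendstoInDistribution (fun i ω ↦ a i • X i ω) l (fun ω ↦ c • Z ω)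
      (fun _ ↦ P) P' :=
  hX.continuous_comp_prodMk_of_tendstoInMeasure_const (g := fun x : E × ℝ ↦ x.2 • x.1)
    (by fun_prop) (tendstoInMeasure_const_of_tendsto P ha) fun _ ↦ aemeasurable_const

lemma tendstoInDistribution_mul_sum_sub_div_sqrt [l.IsCountablyGenerated] {Ω : Type*}
    [MeasurableSpace Ω] {P : Measure Ω} [IsProbabilityMeasure P] {X : ℕ → Ω → ℝ} {Y : Ω' → ℝ}
    (hY : HasLaw Y (gaussianReal 0 Var[X 0; P].toNNReal) P') (hX : MemLp (X 0) 2 P)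
    (hindep : iIndepFun X P) (hident : ∀ k, IdentDistrib (X k) (X 0) P P)
    {m : ι → ℕ} (hm : Tendsto m l atTop) {a : ι → ℝ} {c : ℝ} (ha : Tendsto a l (𝓝 c)) :
    MeasureTheory.TendstoInDistribution
      (fun i ω ↦ a i * (∑ k ∈ Finset.range (m i), X k ω - m i * P[X 0]) / √(m i)) l
      (fun ω ↦ c * Y ω) (fun _ ↦ P) P' := by
  have hclt := tendstoInDistribution_inv_sqrt_mul_sum_sub hY hX hindep hident
  have hclt_m : MeasureTheory.TendstoInDistribution
      (fun i ω ↦ (√(m i))⁻¹ * (∑ k ∈ Finset.range (m i), X k ω - m i * P[X 0])) l Y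
      (fun _ ↦ P) P' :=
    ⟨fun i ↦ hclt.forall_aemeasurable (m i), hclt.aemeasurable_limit, hclt.tendsto.comp hm⟩
  refine (tendstoInDistribution_smul_of_tendsto ha hclt_m).congr (fun i ↦ ?_) .rfl
  exact .of_forall fun ω ↦ by simp only [smul_eq_mul]; ring

end ConvergenceInDistribution

section Bernoulli

variable {X : Type*} [MeasurableSpace X] [MeasurableSingletonClass X]

lemma memLp_bernoulliMeasure {E : Type*} [NormedAddCommGroup E] (x y : X) (p : I) (f : X → E)
    (q : ENNReal) : MemLp f q Ber(x, y, p) := by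
  refine .of_bound (integrable_bernoulliMeasure x y p f).aestronglyMeasurable (max ‖f x‖ ‖f y‖) ?_
  rw [bernoulliMeasure_def, ae_add_measure_iff]
  constructor <;> refine Measure.ae_smul_measure ?_ _ <;> simp

lemma variance_bernoulliMeasure (x y : X) (p : I) (f : X → ℝ) :
    Var[f; Ber(x, y, p)] = p * (1 - p) * (f x - f y) ^ 2 := by
  rw [variance_eq_integral (integrable_bernoulliMeasure x y p f).aemeasurable]
  simp only [integral_bernoulliMeasure, smul_eq_mul]
  ring

end Bernoulli

section Binomial

lemma binomialReal_eq_map_cast_binomial (n : ℕ) (p : I) : binomialReal n p = Bin(ℝ, n, p) := by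
  rw [binomialReal, map_cast_binomial_eq_sum_dirac, Nat.range_succ_eq_Iic]

lemma charFun_map_cast_binomial (n : ℕ) (p : I) (t : ℝ) :
    charFun Bin(ℝ, n, p) t = charFun Ber((1 : ℝ), 0, p) t ^ n := by
  rw [charFun_apply_real, charFun_apply_real, integral_map_cast_binomial, integral_bernoulliMeasure,
    add_pow, Nat.range_succ_eq_Iic]
  refine Finset.sum_congr rfl fun k _ ↦ ?_
  have hexp : Complex.exp (t * k * Complex.I) = Complex.exp (t * Complex.I) ^ k := by
    rw [← Complex.exp_nat_mul]
    congr 1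
    ring
  simp only [Complex.real_smul, Complex.ofReal_mul, Complex.ofReal_pow, Complex.ofReal_sub,
    Complex.ofReal_natCast, Complex.ofReal_one, Complex.ofReal_zero, Complex.exp_zero, hexp,
    mul_one, mul_zero, zero_mul]
  ring

lemma hasLaw_sum_binomial_of_iIndepFun {ι Ω : Type*} [MeasurableSpace Ω] {P : Measure Ω} {p : I}
    {X : ι → Ω → ℝ} (hindep : iIndepFun X P) (hlaw : ∀ i, HasLaw (X i) Ber(1, 0, p) P)
    (s : Finset ι) : HasLaw (fun ω ↦ ∑ i ∈ s, X i ω) Bin(ℝ, s.card, p) P where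
  aemeasurable := Finset.aemeasurable_fun_sum _ fun i _ ↦ (hlaw i).aemeasurable
  map_eq := by
    have := hindep.isProbabilityMeasure
    refine Measure.ext_of_charFun <| funext fun t ↦ ?_
    rw [(hindep.restrict _).charFun_map_fun_finsetSum_eq_prod fun i _ ↦ (hlaw i).aemeasurable]
    simp only [(hlaw _).map_eq, Finset.prod_const, Pi.pow_apply, charFun_map_cast_binomial]

end Binomial

theorem binomial_clt_scaled_general {ι Ω' : Type*} {l : Filter ι} [l.IsCountablyGenerated]
    {Ω : ι → Type*} [∀ i, MeasurableSpace (Ω i)] {P : ∀ i, Measure (Ω i)}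
    [∀ i, IsProbabilityMeasure (P i)] [MeasurableSpace Ω'] {P' : Measure Ω'}
    [IsProbabilityMeasure P'] {p : I} {m : ι → ℕ} (hm : Tendsto m l atTop)
    {X : ∀ i, Ω i → ℝ} (hX : ∀ i, HasLaw (X i) Bin(ℝ, m i, p) (P i))
    {c : ℝ} {a : ι → ℝ} (ha : Tendsto a l (𝓝 c))
    {Z : Ω' → ℝ} (hZ : HasLaw Z (gaussianReal 0 (c ^ 2 * p * (1 - p)).toNNReal) P') :
    MeasureTheory.TendstoInDistribution (fun i ω ↦ a i * (X i ω - m i * p) / √(m i)) l Z P P' := by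
  obtain ⟨Ω₀, _, P₀, B, -, hB, hindep, _⟩ := exists_iid ℕ Ber((1 : ℝ), 0, p)
  have hmean : P₀[B 0] = (p : ℝ) := by simp [(hB 0).integral_eq, integral_bernoulliMeasure]
  have hvar : Var[B 0; P₀] = p * (1 - p) := by simp [(hB 0).variance_eq, variance_bernoulliMeasure]
  have hmemLp : MemLp (B 0) 2 P₀ :=
    ((hB 0).identDistrib .id).memLp_iff.2 (memLp_bernoulliMeasure 1 0 p id 2)
  have hsum i : HasLaw (fun ω ↦ ∑ k ∈ Finset.range (m i), B k ω) Bin(ℝ, m i, p) P₀ := by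
    simpa using hasLaw_sum_binomial_of_iIndepFun hindep hB (Finset.range (m i))
  have hlim : HasLaw (fun x ↦ c * x) (gaussianReal 0 (c ^ 2 * p * (1 - p)).toNNReal)
      (gaussianReal 0 Var[B 0; P₀].toNNReal) := by
    convert! gaussianReal_const_mul (.id (μ := gaussianReal 0 Var[B 0; P₀].toNNReal)) c using 2
    · simp
    · rw [hvar, mul_assoc, Real.toNNReal_mul (sq_nonneg c), Real.toNNReal_of_nonneg (sq_nonneg c)]
  have hclt := tendstoInDistribution_mul_sum_sub_div_sqrt .id hmemLp hindep
    (fun k ↦ (hB k).identDistrib (hB 0)) hm ha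
  rw [hmean] at hclt
  refine tendstoInDistribution_of_forall_identDistrib (fun i ↦ ?_) (hlim.identDistrib hZ) hclt
  exact ((hsum i).identDistrib (hX i)).comp (u := fun x ↦ a i * (x - m i * p) / √(m i))
    (by fun_prop)

/-- Let `p ∈ (0,1)`, `m_n → ∞`, `X_n` Binomial(`m_n`, `p`)-distributed, and `c_n → c`. Then
`c_n·(X_n − m_n·p)/√(m_n)` converges in distribution to the normal distribution with mean `0`
and variance `c²·p(1−p)`. -/
theorem binomial_clt_scaled
    {Ω : Type*} [MeasurableSpace Ω] (P : Measure Ω) [IsProbabilityMeasure P]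
    (p : ℝ) (hp : p ∈ Set.Ioo (0 : ℝ) 1)
    (m : ℕ → ℕ) (hm : Tendsto m atTop atTop)
    (X : ℕ → Ω → ℝ) (hX : ∀ n, Measurable (X n))
    (hlaw : ∀ n, P.map (X n) = binomialReal (m n) p)
    (c : ℝ) (cs : ℕ → ℝ) (hc : Tendsto cs atTop (𝓝 c)) :
    TendstoInDistribution
      (fun n => P.map (fun ω => cs n * (X n ω - (m n : ℝ) * p) / Real.sqrt (m n)))
      (gaussianReal 0 (Real.toNNReal (c ^ 2 * p * (1 - p)))) := by
  lift p to I using Set.Ioo_subset_Icc_self hp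
  have hX_law n : HasLaw (X n) Bin(ℝ, m n, p) P :=
    ⟨(hX n).aemeasurable, (hlaw n).trans (binomialReal_eq_map_cast_binomial _ _)⟩
  have hconv := (binomial_clt_scaled_general hm hX_law hc .id).tendsto
  intro g
  simpa using ProbabilityMeasure.tendsto_iff_forall_integral_tendsto.1 hconv g
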